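/- arXiv:2005.06384 — 3 statements merged into one kernel-verified Lean document; each statement's English description precedes it below -/
import Mathlib

section
/- Let a be a real number with 1 < a < 2. Then for every real x > 0, g_a(x) < G_a(x) < Γ(a,x). -/
/-!
Multiply by `e^x` and put `p = a - 1 ∈ (0, 1)`, `b = b_a`. Then `G_a(x)` becomes the mean of
`(x + s)^p` under the uniform law on `(0, b)`, and `Γ(a, x)` its mean under the standard exponential
law. The constant `b` is the one for which both laws give `s^p` the same mean. The exponential
density minus the uniform one has the sign pattern `+, -, +`, with changes at `log b` and `b`, so
the exponential law gives the larger mean to every strictly convex function of `s^p`: subtracting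
the chord through the two sign changes does not alter the difference of the means, and leaves a
function with the same sign pattern. Finally `(x + s)^p` is a strictly convex function of `s^p`.

For the lower bound, `b^a = a Γ(a) b` gives `G_a(x)` the shape of `g_a(x)` with `b` in place of `2`,
namely `(k(b) / (a b) + Γ(a)) e^(-x)` with `k(b) = (x + b)^a - x^a - b^a`. The function `k` is
strictly concave and vanishes at `0`, so `k(b) / b` is strictly decreasing, and `b < 2`.
-/

open Real Filter Set

/-- Upper incomplete gamma function `Γ(a,x) = ∫_x^∞ t^(a-1) e^(-t) dt`. -/
noncomputable def incGamma (a x : ℝ) : ℝ := ∫ t in Set.Ioi x, t ^ (a - 1) * Real.exp (-t)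

/-- `b_a = Γ(a+1)^(1/(a-1))` for `a ≠ 1`, and `b_1 = e^(1-γ)`. -/
noncomputable def bCoef (a : ℝ) : ℝ :=
  if a = 1 then Real.exp (1 - Real.eulerMascheroniConstant)
  else Real.Gamma (a + 1) ^ (1 / (a - 1))

/-- `G_a(x) = ((x+b_a)^a - x^a) e^(-x) / (a b_a)`. -/
noncomputable def Gbound (a x : ℝ) : ℝ :=
  ((x + bCoef a) ^ a - x ^ a) * Real.exp (-x) / (a * bCoef a)

/-- `g_a(x) = (((x+2)^a - x^a - 2^a)/(2a) + Γ(a)) e^(-x)`. -/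
noncomputable def gbound (a x : ℝ) : ℝ :=
  (((x + 2) ^ a - x ^ a - (2 : ℝ) ^ a) / (2 * a) + Real.Gamma a) * Real.exp (-x)

/-- `g_a^lo(x) = x^a e^(-x) (x-a-1) / ((x-a)^2 + a)`. -/
noncomputable def gLo (a x : ℝ) : ℝ :=
  x ^ a * Real.exp (-x) * (x - a - 1) / ((x - a) ^ 2 + a)

/-- `g_a^hi(x) = x^a e^(-x) / (x-a)`. -/
noncomputable def gHi (a x : ℝ) : ℝ := x ^ a * Real.exp (-x) / (x - a)

open MeasureTheory

section Convexity

variable {S : Set ℝ} {f : ℝ → ℝ}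

lemma strictConvexOn_mul_sub_chord_pos (hf : StrictConvexOn ℝ S f) {y z t : ℝ} (hy : y ∈ S)
    (hz : z ∈ S) (ht : t ∈ S) (hyz : y ≠ z) (hty : t ≠ y) (htz : t ≠ z) :
    0 < (f t - f y - slope f y z * (t - y)) * ((t - y) * (t - z)) := by
  have hslope : 0 < (slope f y t - slope f y z) * (t - z) := by
    simp only [slope_def_field]
    rcases htz.lt_or_gt with h | h
    · exact mul_pos_of_neg_of_neg (sub_neg.2 (hf.secant_strict_mono hy ht hz hty hyz.symm h))
        (sub_neg.2 h)
    · exact mul_pos (sub_pos.2 (hf.secant_strict_mono hy hz ht hyz.symm hty h)) (sub_pos.2 h)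
  have hsecant : f t - f y = slope f y t * (t - y) := by
    rw [slope_def_field, div_mul_cancel₀ _ (sub_ne_zero.2 hty)]
  calc 0 < (t - y) ^ 2 * ((slope f y t - slope f y z) * (t - z)) :=
        mul_pos (sq_pos_of_ne_zero (sub_ne_zero.2 hty)) hslope
    _ = _ := by rw [hsecant]; ring

lemma strictAntiOn_comp_const_add_sub {c x : ℝ} (hf : StrictConcaveOn ℝ (Ici c) f) (hx : 0 < x) :
    StrictAntiOn (fun s => f (x + s) - f s) (Ici c) := by
  intro r hr s hs hrs
  have hr' : c ≤ r := hr
  have hxr : x + r ∈ Ici c := by simp only [mem_Ici]; linarith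
  have hxs : x + s ∈ Ici c := by simp only [mem_Ici]; linarith
  have hleft : (f (x + s) - f r) / (x + s - r) < (f (x + r) - f r) / (x + r - r) :=
    hf.secant_strict_mono hr hxr hxs (by linarith) (by linarith) (by linarith)
  have hright : (f s - f (x + s)) / (s - (x + s)) < (f r - f (x + s)) / (r - (x + s)) :=
    hf.secant_strict_mono hxs hr hs (by linarith) (by linarith) hrs
  rw [← neg_div_neg_eq (f s - _), ← neg_div_neg_eq (f r - _)] at hright
  simp only [neg_sub, add_sub_cancel_right] at hleft hright
  exact (div_lt_div_iff_of_pos_right hx).1 (hright.trans hleft)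

end Convexity

section MeanComparison

lemma integral_pos_of_ae_pos {α : Type*} [MeasurableSpace α] {μ : Measure α} [NeZero μ]
    {g : α → ℝ} (hg : Integrable g μ) (hpos : ∀ᵐ s ∂μ, 0 < g s) : 0 < ∫ s, g s ∂μ := by
  have hnonneg : 0 ≤ᵐ[μ] g := hpos.mono fun _ h => h.le
  refine (integral_nonneg_of_ae hnonneg).lt_of_ne' fun hzero => ?_
  obtain ⟨s, hs, hs'⟩ := (((integral_eq_zero_iff_of_nonneg_ae hnonneg hg).1 hzero).and hpos).exists
  exact hs'.ne' hs

lemma integral_strictConvexOn_comp_mul_pos {α : Type*} [MeasurableSpace α] {μ : Measure α}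
    [NeZero μ] {S : Set ℝ} {f : ℝ → ℝ} {u w : α → ℝ} {y z : ℝ} (hf : StrictConvexOn ℝ S f)
    (hy : y ∈ S) (hz : z ∈ S) (hyz : y ≠ z) (hu : ∀ᵐ s ∂μ, u s ∈ S)
    (hsign : ∀ᵐ s ∂μ, 0 < (u s - y) * (u s - z) * w s)
    (hw : Integrable w μ) (huw : Integrable (fun s => u s * w s) μ)
    (hfw : Integrable (fun s => f (u s) * w s) μ)
    (hw0 : ∫ s, w s ∂μ = 0) (huw0 : ∫ s, u s * w s ∂μ = 0) :
    0 < ∫ s, f (u s) * w s ∂μ := by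
  let m := slope f y z
  have hsplit : ∀ s, (f (u s) - f y - m * (u s - y)) * w s =
      f (u s) * w s - ((f y - m * y) * w s + m * (u s * w s)) := fun s => by ring
  have haff : Integrable (fun s => (f y - m * y) * w s + m * (u s * w s)) μ :=
    (hw.const_mul _).add (huw.const_mul _)
  have haff0 : ∫ s, ((f y - m * y) * w s + m * (u s * w s)) ∂μ = 0 := by
    rw [integral_add (hw.const_mul _) (huw.const_mul _), integral_const_mul, integral_const_mul,
      hw0, huw0, mul_zero, mul_zero, add_zero]
  have hpos : ∀ᵐ s ∂μ, 0 < (f (u s) - f y - m * (u s - y)) * w s := by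
    filter_upwards [hu, hsign] with s hs hsw
    have hne : (u s - y) * (u s - z) ≠ 0 := left_ne_zero_of_mul hsw.ne'
    have hchord := strictConvexOn_mul_sub_chord_pos hf hy hz hs hyz
      (sub_ne_zero.1 (left_ne_zero_of_mul hne)) (sub_ne_zero.1 (right_ne_zero_of_mul hne))
    refine pos_of_mul_pos_left (b := ((u s - y) * (u s - z)) ^ 2) ?_ (sq_nonneg _)
    calc 0 < _ := mul_pos hchord hsw
      _ = _ := by ring
  calc 0 < ∫ s, (f (u s) - f y - m * (u s - y)) * w s ∂μ :=
        integral_pos_of_ae_pos ((hfw.sub haff).congr (ae_of_all _ fun s => (hsplit s).symm)) hpos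
    _ = ∫ s, f (u s) * w s ∂μ := by
        simp only [hsplit]
        rw [integral_sub hfw haff, haff0, sub_zero]

/-- On `(0, ∞)`: the density of the standard exponential law minus the density of the uniform law
on `(0, b]`. -/
noncomputable def expSubUniform (b s : ℝ) : ℝ := exp (-s) - (Iic b).indicator (fun _ => b⁻¹) s

variable {b : ℝ}

lemma mul_sub_mul_expSubUniform_pos {u : ℝ → ℝ} (hu : StrictMonoOn u (Ioi 0)) (hb : 1 < b) {s : ℝ}
    (hs : 0 < s) (hsl : s ≠ log b) (hsb : s ≠ b) :
    0 < (u s - u (log b)) * (u s - u b) * expSubUniform b s := by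
  have hb0 : 0 < b := by linarith
  have hl0 : 0 < log b := log_pos hb
  have hlb : log b < b := by linarith [log_le_sub_one_of_pos hb0]
  have hexp : exp (-log b) = b⁻¹ := by rw [exp_neg, exp_log hb0]
  rcases hsb.lt_or_gt with hsb | hsb
  · have hub : u s - u b < 0 := sub_neg.2 (hu hs hb0 hsb)
    rw [expSubUniform, indicator_of_mem (mem_Iic.2 hsb.le), ← hexp]
    rcases hsl.lt_or_gt with hsl | hsl
    · exact mul_pos (mul_pos_of_neg_of_neg (sub_neg.2 (hu hs hl0 hsl)) hub)
        (sub_pos.2 (exp_lt_exp.2 (neg_lt_neg hsl)))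
    · exact mul_pos_of_neg_of_neg (mul_neg_of_pos_of_neg (sub_pos.2 (hu hl0 hs hsl)) hub)
        (sub_neg.2 (exp_lt_exp.2 (neg_lt_neg hsl)))
  · rw [expSubUniform, indicator_of_notMem (notMem_Iic.2 hsb), sub_zero]
    exact mul_pos (mul_pos (sub_pos.2 (hu hl0 hs (hlb.trans hsb))) (sub_pos.2 (hu hb0 hs hsb)))
      (exp_pos _)

section Integral

variable {g : ℝ → ℝ}

lemma mul_expSubUniform (g : ℝ → ℝ) (b s : ℝ) :
    g s * expSubUniform b s = g s * exp (-s) - (Iic b).indicator (fun t => b⁻¹ * g t) s := by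
  by_cases hs : s ∈ Iic b <;> simp [expSubUniform, hs, mul_sub, mul_comm]

lemma integrableOn_Ioc_of_mul_exp_neg (hg : IntegrableOn (fun s => g s * exp (-s)) (Ioi 0)) :
    IntegrableOn g (Ioc 0 b) := by
  have hmul := (hg.mono_set Ioc_subset_Ioi_self).mul_continuousOn_of_subset
    continuous_exp.continuousOn measurableSet_Ioc isCompact_Icc (Ioc_subset_Icc_self (b := b))
  simpa only [mul_assoc, ← exp_add, neg_add_cancel, exp_zero, mul_one] using hmul

lemma integrableOn_indicator_of_mul_exp_neg
    (hg : IntegrableOn (fun s => g s * exp (-s)) (Ioi 0)) :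
    IntegrableOn ((Iic b).indicator fun s => b⁻¹ * g s) (Ioi 0) := by
  rw [integrableOn_indicator_iff measurableSet_Iic, Iic_inter_Ioi]
  exact (integrableOn_Ioc_of_mul_exp_neg hg).const_mul _

lemma integrableOn_mul_expSubUniform (hg : IntegrableOn (fun s => g s * exp (-s)) (Ioi 0)) :
    IntegrableOn (fun s => g s * expSubUniform b s) (Ioi 0) := by
  simp only [mul_expSubUniform]
  exact hg.sub (integrableOn_indicator_of_mul_exp_neg hg)

lemma integral_mul_expSubUniform (hb : 0 ≤ b)
    (hg : IntegrableOn (fun s => g s * exp (-s)) (Ioi 0)) :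
    ∫ s in Ioi 0, g s * expSubUniform b s =
      (∫ s in Ioi 0, g s * exp (-s)) - ⨍ s in (0)..b, g s := by
  simp only [mul_expSubUniform]
  rw [integral_sub hg (integrableOn_indicator_of_mul_exp_neg hg),
    setIntegral_indicator measurableSet_Iic, Ioi_inter_Iic, integral_const_mul,
    interval_average_eq, intervalIntegral.integral_of_le hb, sub_zero, smul_eq_mul]

end Integral

lemma integrableOn_expSubUniform : IntegrableOn (expSubUniform b) (Ioi 0) := by
  have hmul := integrableOn_mul_expSubUniform (g := 1) (b := b)
  simp only [Pi.one_apply, one_mul] at hmul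
  exact hmul (integrableOn_exp_neg_Ioi 0)

lemma integral_expSubUniform (hb : 0 < b) : ∫ s in Ioi 0, expSubUniform b s = 0 := by
  have hmul := integral_mul_expSubUniform (g := 1) hb.le
  simp only [Pi.one_apply, one_mul] at hmul
  rw [hmul (integrableOn_exp_neg_Ioi 0), integral_exp_neg_Ioi_zero, interval_average_eq,
    intervalIntegral.integral_const, smul_smul, sub_zero, inv_mul_cancel₀ hb.ne', one_smul,
    sub_self]

lemma intervalAverage_comp_lt_integral_comp_mul_exp_neg {S : Set ℝ} {f u : ℝ → ℝ}
    (hf : StrictConvexOn ℝ S f) (hu : StrictMonoOn u (Ioi 0)) (huS : MapsTo u (Ioi 0) S)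
    (hb : 1 < b) (hui : IntegrableOn (fun s => u s * exp (-s)) (Ioi 0))
    (hfui : IntegrableOn (fun s => f (u s) * exp (-s)) (Ioi 0))
    (hmean : ⨍ s in (0)..b, u s = ∫ s in Ioi 0, u s * exp (-s)) :
    ⨍ s in (0)..b, f (u s) < ∫ s in Ioi 0, f (u s) * exp (-s) := by
  have hb0 : 0 < b := by linarith
  have hl0 : 0 < log b := log_pos hb
  have hlb : log b < b := by linarith [log_le_sub_one_of_pos hb0]
  have hmoment : ∫ s in Ioi 0, u s * expSubUniform b s = 0 := by
    rw [integral_mul_expSubUniform hb0.le hui, hmean, sub_self]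
  have hsign : ∀ᵐ s ∂volume.restrict (Ioi (0 : ℝ)),
      0 < (u s - u (log b)) * (u s - u b) * expSubUniform b s := by
    filter_upwards [ae_restrict_mem measurableSet_Ioi, Measure.ae_ne _ (log b), Measure.ae_ne _ b]
      with s hs hsl hsb using mul_sub_mul_expSubUniform_pos hu hb hs hsl hsb
  have : NeZero (volume.restrict (Ioi (0 : ℝ))) := ⟨by simp⟩
  have hpos := integral_strictConvexOn_comp_mul_pos hf (huS hl0) (huS hb0) (hu hl0 hb0 hlb).ne
    ((ae_restrict_mem measurableSet_Ioi).mono huS) hsign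
    integrableOn_expSubUniform (integrableOn_mul_expSubUniform hui)
    (integrableOn_mul_expSubUniform hfui) (integral_expSubUniform hb0) hmoment
  rwa [integral_mul_expSubUniform hb0.le hfui, sub_pos] at hpos

end MeanComparison

section Powers

lemma hasDerivAt_add_rpow_rpow_inv {q x u : ℝ} (hq : q ≠ 0) (hx : 0 < x) (hu : 0 < u) :
    HasDerivAt (fun u => (x + u ^ q) ^ q⁻¹) ((u ^ q / (x + u ^ q)) ^ (1 - q⁻¹)) u := by
  have huq : 0 < u ^ q := rpow_pos_of_pos hu q
  have hexponent : u ^ (q - 1) = (u ^ q) ^ (1 - q⁻¹) := by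
    rw [← rpow_mul hu.le]
    congr 1
    field_simp
  have hinner : HasDerivAt (fun u => x + u ^ q) (q * u ^ (q - 1)) u :=
    (hasDerivAt_rpow_const (Or.inl hu.ne')).const_add x
  convert! hinner.rpow_const (p := q⁻¹) (Or.inl (by positivity)) using 1
  rw [hexponent, div_rpow huq.le (by positivity), ← neg_sub 1 q⁻¹, rpow_neg (by positivity)]
  field_simp

lemma strictConvexOn_add_rpow_rpow_inv {q x : ℝ} (hq : 1 < q) (hx : 0 < x) :
    StrictConvexOn ℝ (Ici 0) fun u => (x + u ^ q) ^ q⁻¹ := by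
  have hq0 : 0 < q := by linarith
  refine StrictMonoOn.strictConvexOn_of_deriv (convex_Ici 0) ?_ ?_
  · exact ((continuous_const.add (continuous_rpow_const hq0.le)).rpow_const
      fun _ => Or.inr (by positivity)).continuousOn
  rw [interior_Ici]
  intro u (hu : 0 < u) v (hv : 0 < v) huv
  rw [(hasDerivAt_add_rpow_rpow_inv hq0.ne' hx hu).deriv,
    (hasDerivAt_add_rpow_rpow_inv hq0.ne' hx hv).deriv]
  refine rpow_lt_rpow (by positivity) ?_ (sub_pos.2 (inv_lt_one_of_one_lt₀ hq))
  rw [div_lt_div_iff₀ (by positivity) (by positivity)]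
  nlinarith [rpow_lt_rpow hu.le huv hq0]

variable {a x : ℝ}

lemma strictConcaveOn_const_add_rpow_sub_rpow (ha1 : 1 < a) (ha2 : a < 2) (hx : 0 < x) :
    StrictConcaveOn ℝ (Ici 0) fun s => (x + s) ^ a - s ^ a := by
  have hder : ∀ s, HasDerivAt (fun s => (x + s) ^ a - s ^ a)
      (a * ((x + s) ^ (a - 1) - s ^ (a - 1))) s := fun s => by
    convert! (((hasDerivAt_id s).const_add x).rpow_const (Or.inr ha1.le)).sub
      (hasDerivAt_rpow_const (Or.inr ha1.le)) using 1
    simp only [id_eq]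
    ring
  refine StrictAntiOn.strictConcaveOn_of_deriv (convex_Ici 0)
    (fun s _ => (hder s).continuousAt.continuousWithinAt) ?_
  rw [interior_Ici, funext fun s => (hder s).deriv]
  intro r hr s hs hrs
  exact mul_lt_mul_of_pos_left (strictAntiOn_comp_const_add_sub
    (strictConcaveOn_rpow (sub_pos.2 ha1) (by linarith)) hx
    (Ioi_subset_Ici_self hr) (Ioi_subset_Ici_self hs) hrs) (by linarith)

lemma strictAntiOn_add_rpow_sub_rpow_sub_rpow_div (ha1 : 1 < a) (ha2 : a < 2) (hx : 0 < x) :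
    StrictAntiOn (fun b => ((x + b) ^ a - x ^ a - b ^ a) / b) (Ioi 0) := by
  intro b (hb : 0 < b) c (hc : 0 < c) hbc
  have hsecant := (strictConcaveOn_const_add_rpow_sub_rpow ha1 ha2 hx).secant_strict_mono
    self_mem_Ici hb.le hc.le hb.ne' hc.ne' hbc
  simpa only [add_zero, zero_rpow (by linarith : a ≠ 0), sub_zero, sub_right_comm] using hsecant

end Powers

section GammaIntegrals

variable {p x : ℝ}

lemma integrableOn_rpow_mul_exp_neg (hp : -1 < p) :
    IntegrableOn (fun t : ℝ => t ^ p * exp (-t)) (Ioi 0) := by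
  simpa only [rpow_one] using integrableOn_rpow_mul_exp_neg_rpow hp one_pos

lemma integral_rpow_mul_exp_neg (hp : -1 < p) :
    ∫ t in Ioi (0 : ℝ), t ^ p * exp (-t) = Gamma (p + 1) := by
  rw [Gamma_eq_integral (by linarith), add_sub_cancel_right]
  simp only [mul_comm]

lemma const_add_rpow_mul_exp_neg_eq (p x s : ℝ) :
    (x + s) ^ p * exp (-s) = exp x * ((x + s) ^ p * exp (-(x + s))) := by
  rw [mul_left_comm, ← exp_add, neg_add, add_neg_cancel_left]

lemma integrableOn_const_add_rpow_mul_exp_neg (hp : -1 < p) (hx : 0 ≤ x) :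
    IntegrableOn (fun s => (x + s) ^ p * exp (-s)) (Ioi 0) := by
  have htail := (integrableOn_rpow_mul_exp_neg hp).mono_set (Ioi_subset_Ioi hx)
  rw [← (measurePreserving_add_left volume x).integrableOn_comp_preimage
    (measurableEmbedding_addLeft x), preimage_const_add_Ioi, sub_self] at htail
  simp only [const_add_rpow_mul_exp_neg_eq]
  exact htail.const_mul (exp x)

lemma incGamma_eq_exp_neg_mul_integral (a x : ℝ) :
    incGamma a x = exp (-x) * ∫ s in Ioi 0, (x + s) ^ (a - 1) * exp (-s) := by
  have hshift := (measurePreserving_add_left volume x).setIntegral_preimage_emb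
    (measurableEmbedding_addLeft x) (fun t : ℝ => t ^ (a - 1) * exp (-t)) (Ioi x)
  rw [preimage_const_add_Ioi, sub_self] at hshift
  simp only [const_add_rpow_mul_exp_neg_eq, integral_const_mul]
  rw [hshift, ← mul_assoc, ← exp_add, neg_add_cancel, exp_zero, one_mul, incGamma]

lemma intervalAverage_const_add_rpow (hp : -1 < p) (x b : ℝ) :
    ⨍ s in (0)..b, (x + s) ^ p = ((x + b) ^ (p + 1) - x ^ (p + 1)) / ((p + 1) * b) := by
  rw [interval_average_eq_div, intervalIntegral.integral_comp_add_left (fun t => t ^ p) x,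
    integral_rpow (Or.inl hp), add_zero, sub_zero, div_div]

lemma intervalAverage_const_add_rpow_lt_integral {b : ℝ} (hp0 : 0 < p) (hp1 : p < 1) (hb : 1 < b)
    (hbp : b ^ p = Gamma (p + 2)) (hx : 0 < x) :
    ⨍ s in (0)..b, (x + s) ^ p < ∫ s in Ioi 0, (x + s) ^ p * exp (-s) := by
  have hb0 : 0 < b := by linarith
  have hp : -1 < p := by linarith
  have hmean : ⨍ s in (0)..b, s ^ p = ∫ s in Ioi 0, s ^ p * exp (-s) := by
    have huniform := intervalAverage_const_add_rpow hp 0 b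
    simp only [zero_add, zero_rpow (by linarith : p + 1 ≠ 0), sub_zero] at huniform
    rw [huniform, integral_rpow_mul_exp_neg hp, rpow_add_one hb0.ne', hbp,
      show p + 2 = p + 1 + 1 by ring, Gamma_add_one (by linarith)]
    field_simp
  have hf : StrictConvexOn ℝ (Ici 0) fun u => (x + u ^ p⁻¹) ^ p := by
    simpa only [inv_inv] using
      strictConvexOn_add_rpow_rpow_inv ((one_lt_inv₀ hp0).2 hp1) hx
  have hfu : ∀ s, 0 ≤ s → (x + (s ^ p) ^ p⁻¹) ^ p = (x + s) ^ p := fun s hs => by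
    rw [rpow_rpow_inv hs hp0.ne']
  have hfi : IntegrableOn (fun s => (x + (s ^ p) ^ p⁻¹) ^ p * exp (-s)) (Ioi 0) :=
    (integrableOn_const_add_rpow_mul_exp_neg hp hx.le).congr_fun
      (fun s (hs : 0 < s) => by rw [hfu s hs.le]) measurableSet_Ioi
  have hlt := intervalAverage_comp_lt_integral_comp_mul_exp_neg hf
    (fun r (hr : 0 < r) s _ hrs => rpow_lt_rpow hr.le hrs hp0)
    (fun s (hs : 0 < s) => rpow_nonneg hs.le p) hb (integrableOn_rpow_mul_exp_neg hp) hfi hmean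
  rw [interval_average_eq, intervalIntegral.integral_congr (g := fun s => (x + s) ^ p)
    fun s hs => hfu s (uIcc_of_le hb0.le ▸ hs).1, ← interval_average_eq] at hlt
  exact hlt.trans_eq (setIntegral_congr_fun measurableSet_Ioi
    fun s (hs : 0 < s) => by rw [hfu s hs.le])

end GammaIntegrals

section Coefficient

variable {a : ℝ}

lemma one_lt_Gamma_of_two_lt {s : ℝ} (hs : 2 < s) : 1 < Gamma s :=
  Gamma_two ▸ Gamma_strictMonoOn_Ici self_mem_Ici hs.le hs

-- Log-convexity on `[2, 3]` gives only `≤`; on `[3, 4]` it leaves room for a strict Bernoulli.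
lemma Gamma_add_one_lt_two_rpow (ha1 : 1 < a) (ha2 : a < 2) : Gamma (a + 1) < 2 ^ (a - 1) := by
  have hΓ3 : Gamma 3 = 2 := by simp [Gamma_ofNat_eq_factorial]
  have hΓ4 : Gamma 4 = 2 * 3 := by norm_num [Gamma_ofNat_eq_factorial, Nat.factorial]
  have hlogconvex : (a + 1) * Gamma (a + 1) ≤ 2 * 3 ^ (a - 1) := calc
    (a + 1) * Gamma (a + 1) = Gamma ((2 - a) * 3 + (a - 1) * 4) := by
      rw [← Gamma_add_one (by linarith)]
      ring_nf
    _ ≤ Gamma 3 ^ (2 - a) * Gamma 4 ^ (a - 1) :=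
      Gamma_mul_add_mul_le_rpow_Gamma_mul_rpow_Gamma (by norm_num) (by norm_num) (by linarith)
        (by linarith) (by ring)
    _ = 2 * 3 ^ (a - 1) := by
      rw [hΓ3, hΓ4, mul_rpow (by norm_num) (by norm_num), ← mul_assoc, ← rpow_add (by norm_num),
        sub_add_sub_cancel, show (2 : ℝ) - 1 = 1 by norm_num, rpow_one]
  have hbernoulli : (1 + 1 / 2 : ℝ) ^ (a - 1) < 1 + (a - 1) * (1 / 2) :=
    rpow_one_add_lt_one_add_mul_self (by norm_num) (by norm_num) (by linarith) (by linarith)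
  refine lt_of_mul_lt_mul_left (hlogconvex.trans_lt ?_) (by linarith : 0 ≤ a + 1)
  calc (2 : ℝ) * 3 ^ (a - 1) = 2 * (1 + 1 / 2) ^ (a - 1) * 2 ^ (a - 1) := by
        rw [mul_assoc, ← mul_rpow (by norm_num) (by norm_num)]
        norm_num
    _ < (a + 1) * 2 ^ (a - 1) := by
        gcongr
        linarith

lemma bCoef_pos (ha : -1 < a) : 0 < bCoef a := by
  rw [bCoef]
  split_ifs
  · exact exp_pos _
  · exact rpow_pos_of_pos (Gamma_pos_of_pos (by linarith)) _

lemma bCoef_rpow_sub_one (ha : -1 < a) (ha1 : a ≠ 1) : bCoef a ^ (a - 1) = Gamma (a + 1) := by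
  rw [bCoef, if_neg ha1, ← rpow_mul (Gamma_nonneg_of_nonneg (by linarith)),
    one_div_mul_cancel (sub_ne_zero.2 ha1), rpow_one]

lemma bCoef_rpow_self (ha : 0 < a) (ha1 : a ≠ 1) : bCoef a ^ a = a * Gamma a * bCoef a := by
  rw [← Gamma_add_one ha.ne', ← bCoef_rpow_sub_one (by linarith) ha1,
    ← rpow_add_one (bCoef_pos (by linarith)).ne', sub_add_cancel]

lemma one_lt_bCoef (ha : 1 < a) : 1 < bCoef a := by
  rw [bCoef, if_neg ha.ne']
  exact one_lt_rpow (one_lt_Gamma_of_two_lt (by linarith)) (one_div_pos.2 (sub_pos.2 ha))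

lemma bCoef_lt_two (ha1 : 1 < a) (ha2 : a < 2) : bCoef a < 2 := by
  have hpow : bCoef a ^ (a - 1) < 2 ^ (a - 1) :=
    bCoef_rpow_sub_one (by linarith) ha1.ne' ▸ Gamma_add_one_lt_two_rpow ha1 ha2
  exact (rpow_lt_rpow_iff (bCoef_pos (by linarith)).le zero_le_two (sub_pos.2 ha1)).1 hpow

end Coefficient

section Bounds

variable {a : ℝ}

lemma Gbound_eq_exp_neg_mul_intervalAverage (ha : 0 < a) (x : ℝ) :
    Gbound a x = exp (-x) * ⨍ s in (0)..(bCoef a), (x + s) ^ (a - 1) := by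
  rw [Gbound, intervalAverage_const_add_rpow (by linarith), sub_add_cancel, mul_div_right_comm,
    mul_comm]

lemma Gbound_eq_add_Gamma_mul_exp_neg (ha : 0 < a) (ha1 : a ≠ 1) (x : ℝ) :
    Gbound a x = (((x + bCoef a) ^ a - x ^ a - bCoef a ^ a) / (bCoef a * a) + Gamma a)
      * exp (-x) := by
  have hb : bCoef a ≠ 0 := (bCoef_pos (by linarith)).ne'
  rw [Gbound, bCoef_rpow_self ha ha1]
  field_simp
  ring

end Bounds

theorem stmt3 (a : ℝ) (ha1 : 1 < a) (ha2 : a < 2) :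
    ∀ x : ℝ, 0 < x → gbound a x < Gbound a x ∧ Gbound a x < incGamma a x := by
  intro x hx
  have ha0 : 0 < a := by linarith
  constructor
  · have hslope := strictAntiOn_add_rpow_sub_rpow_sub_rpow_div ha1 ha2 hx
      (bCoef_pos (by linarith)) (mem_Ioi.2 two_pos) (bCoef_lt_two ha1 ha2)
    rw [Gbound_eq_add_Gamma_mul_exp_neg ha0 ha1.ne', gbound, ← div_div, ← div_div]
    gcongr
  · rw [Gbound_eq_exp_neg_mul_intervalAverage ha0, incGamma_eq_exp_neg_mul_integral]
    have hb : bCoef a ^ (a - 1) = Gamma (a - 1 + 2) := by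
      rw [bCoef_rpow_sub_one (by linarith) ha1.ne']
      ring_nf
    exact mul_lt_mul_of_pos_left (intervalAverage_const_add_rpow_lt_integral (sub_pos.2 ha1)
      (by linarith) (one_lt_bCoef ha1) hb hx) (exp_pos _)
end

section
/- Let a be a real number with a < -1. Then g_a^lo(x)/Γ(a,x) → 1 both as x → 0+ and as x → ∞. Moreover, for every real a < 0, g_a^hi(x)/Γ(a,x) → 1 both as x → 0+ and as x → ∞. -/
/-!
Differentiating gives `-(gHi a)' t = t^(a-1) e^(-t) (1 + r t)` with `r t = t / (t - a)^2`, so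
`gHi a x = Γ(a,x) + ∫_x^∞ t^(a-1) e^(-t) r t dt`. Since `r` tends to `0` both at `0` (if `a ≠ 0`)
and at `∞`, the remainder is a tail integral of something negligible against the integrand of
`Γ(a,x)`. At `∞` this alone makes the remainder negligible against `Γ(a,x)`; at `0+` one also needs
`Γ(a,x) → ∞`, which is where `a < 0` enters.

The claims on `gLo` reduce to those on `gHi`, since
`gLo a x = gHi a x * (1 - x / ((x - a)^2 + a))`.
-/

open Real Filter Set

open MeasureTheory Asymptotics Topology

section TailIntegral

variable {α E : Type*} [LinearOrder α] [TopologicalSpace α] [MeasurableSpace α]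
  [OpensMeasurableSpace α] [NormedAddCommGroup E] [NormedSpace ℝ E] {μ : Measure α}
  {f : α → E} {g : α → ℝ}

lemma isLittleO_setIntegral_Ioi_atTop [OrderClosedTopology α]
    (hg : IntegrableAtFilter g atTop μ) (hg_nonneg : ∀ᶠ t in atTop, 0 ≤ g t)
    (hfg : f =o[atTop] g) :
    (fun x => ∫ t in Ioi x, f t ∂μ) =o[atTop] fun x => ∫ t in Ioi x, g t ∂μ := by
  refine isLittleO_iff.2 fun ε hε => ?_
  obtain ⟨s, hs, hgs⟩ := hg
  have hbound : ∀ᶠ t in atTop, ‖f t‖ ≤ ε * g t := by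
    filter_upwards [isLittleO_iff.1 hfg hε, hg_nonneg] with t hle hnonneg
    rwa [Real.norm_of_nonneg hnonneg] at hle
  filter_upwards [eventually_forall_ge_atTop.2 (hbound.and hs)] with x hx
  have hgx : IntegrableOn g (Ioi x) μ := hgs.mono_set fun t ht => (hx t (le_of_lt ht)).2
  calc ‖∫ t in Ioi x, f t ∂μ‖
      ≤ ∫ t in Ioi x, ε * g t ∂μ :=
        norm_integral_le_of_norm_le (hgx.const_mul ε)
          (ae_restrict_of_forall_mem measurableSet_Ioi fun t ht => (hx t (le_of_lt ht)).1)
    _ = ε * ∫ t in Ioi x, g t ∂μ := integral_const_mul ..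
    _ ≤ ε * ‖∫ t in Ioi x, g t ∂μ‖ := by gcongr; exact Real.le_norm_self _

lemma setIntegral_Ioi_eq_add [OrderClosedTopology α] {x d : α} (hxd : x ≤ d)
    (hf : IntegrableOn f (Ioi x) μ) :
    ∫ t in Ioi x, f t ∂μ = ∫ t in Ioc x d, f t ∂μ + ∫ t in Ioi d, f t ∂μ := by
  rw [← Ioc_union_Ioi_eq_Ioi hxd] at hf ⊢
  exact setIntegral_union (Ioc_disjoint_Ioi le_rfl) measurableSet_Ioi hf.left_of_union
    hf.right_of_union

lemma isLittleO_setIntegral_Ioi_nhdsGT [OrderTopology α] [NoMaxOrder α] [DenselyOrdered α] {c : α}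
    (hf : ∀ x > c, IntegrableOn f (Ioi x) μ) (hg : ∀ x > c, IntegrableOn g (Ioi x) μ)
    (hg_nonneg : ∀ᶠ t in 𝓝[>] c, 0 ≤ g t) (hfg : f =o[𝓝[>] c] g)
    (hg_atTop : Tendsto (fun x => ∫ t in Ioi x, g t ∂μ) (𝓝[>] c) atTop) :
    (fun x => ∫ t in Ioi x, f t ∂μ) =o[𝓝[>] c] fun x => ∫ t in Ioi x, g t ∂μ := by
  refine isLittleO_iff.2 fun ε hε => ?_
  have hbound : ∀ᶠ t in 𝓝[>] c, ‖f t‖ ≤ ε / 2 * g t := by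
    filter_upwards [isLittleO_iff.1 hfg (half_pos hε), hg_nonneg] with t hle hnonneg
    rwa [Real.norm_of_nonneg hnonneg] at hle
  obtain ⟨d, hcd, hd⟩ := mem_nhdsGT_iff_exists_Ioc_subset.1 hbound
  -- The part of the integral of `f` beyond `d` is fixed, so the divergence of the integral of `g`
  -- absorbs it.
  set K := ‖∫ t in Ioi d, f t ∂μ‖ - ε / 2 * ∫ t in Ioi d, g t ∂μ with hK
  filter_upwards [Ioc_mem_nhdsGT hcd, hg_atTop.eventually_ge_atTop (K / (ε / 2))] with x hx hKx
  have hIoc : ‖∫ t in Ioc x d, f t ∂μ‖ ≤ ε / 2 * ∫ t in Ioc x d, g t ∂μ := by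
    rw [← integral_const_mul]
    exact norm_integral_le_of_norm_le
      (((hg x hx.1).mono_set Ioc_subset_Ioi_self).const_mul _)
      (ae_restrict_of_forall_mem measurableSet_Ioc fun t ht => hd ⟨hx.1.trans ht.1, ht.2⟩)
  calc ‖∫ t in Ioi x, f t ∂μ‖
      ≤ ‖∫ t in Ioc x d, f t ∂μ‖ + ‖∫ t in Ioi d, f t ∂μ‖ := by
        rw [setIntegral_Ioi_eq_add hx.2 (hf x hx.1)]
        exact norm_add_le _ _
    _ ≤ ε / 2 * ∫ t in Ioi x, g t ∂μ + K := by
        rw [setIntegral_Ioi_eq_add hx.2 (hg x hx.1)]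
        linarith
    _ ≤ ε * ∫ t in Ioi x, g t ∂μ := by
        rw [div_le_iff₀' (half_pos hε)] at hKx
        linarith
    _ ≤ ε * ‖∫ t in Ioi x, g t ∂μ‖ := by gcongr; exact Real.le_norm_self _

end TailIntegral

lemma integrableOn_Ioi_rpow_mul_exp_neg (s : ℝ) {x : ℝ} (hx : 0 < x) :
    IntegrableOn (fun t : ℝ => t ^ s * exp (-t)) (Ioi x) := by
  refine integrable_of_isBigO_exp_neg one_half_pos ?_ ?_
  · exact (continuousOn_id.rpow_const fun t ht => .inl (hx.trans_le ht).ne').mul (by fun_prop)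
  · simpa only [mul_comm] using (Gamma_integrand_isLittleO s).isBigO

lemma rpow_mul_exp_neg_pos (s : ℝ) {t : ℝ} (ht : 0 < t) : 0 < t ^ s * exp (-t) :=
  mul_pos (rpow_pos_of_pos ht s) (exp_pos _)

lemma incGamma_pos (a : ℝ) {x : ℝ} (hx : 0 < x) : 0 < incGamma a x := by
  have hpos : ∀ t ∈ Ioi x, 0 < t ^ (a - 1) * exp (-t) := fun t ht =>
    rpow_mul_exp_neg_pos _ (hx.trans ht)
  have hsupp : Ioi x ⊆ Function.support fun t => t ^ (a - 1) * exp (-t) := fun t ht =>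
    (hpos t ht).ne'
  refine (setIntegral_pos_iff_support_of_nonneg_ae
    (ae_restrict_of_forall_mem measurableSet_Ioi fun t ht => (hpos t ht).le)
    (integrableOn_Ioi_rpow_mul_exp_neg (a - 1) hx)).2 ?_
  rw [inter_eq_right.2 hsupp, Real.volume_Ioi]
  exact ENNReal.zero_lt_top

lemma hasDerivAt_gHi {a x : ℝ} (hx : 0 < x) (hxa : x ≠ a) :
    HasDerivAt (gHi a) (-(x ^ (a - 1) * exp (-x) * (1 + x / (x - a) ^ 2))) x := by
  have hxa' : x - a ≠ 0 := sub_ne_zero.2 hxa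
  have h := ((hasDerivAt_rpow_const (p := a) (.inl hx.ne')).mul (hasDerivAt_neg x).exp).div
    ((hasDerivAt_id x).sub_const a) hxa'
  refine h.congr_deriv ?_
  have hpow : x ^ a = x ^ (a - 1) * x := by rw [← rpow_add_one hx.ne', sub_add_cancel]
  simp only [id, Pi.mul_apply, hpow]
  field_simp
  ring

lemma tendsto_gHi_atTop (a : ℝ) : Tendsto (gHi a) atTop (𝓝 0) := by
  have hexp : Tendsto (fun x : ℝ => x ^ a * exp (-x)) atTop (𝓝 0) := by
    simpa using tendsto_rpow_mul_exp_neg_mul_atTop_nhds_zero a 1 one_pos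
  exact hexp.div_atTop (tendsto_atTop_add_const_right _ (-a) tendsto_id)

section Remainder

variable {a x : ℝ}

lemma integrableOn_Ioi_and_integral_eq_gHi (hx : 0 < x) (hax : a < x) :
    IntegrableOn (fun t => t ^ (a - 1) * exp (-t) * (1 + t / (t - a) ^ 2)) (Ioi x) ∧
      ∫ t in Ioi x, t ^ (a - 1) * exp (-t) * (1 + t / (t - a) ^ 2) = gHi a x := by
  have hderiv : ∀ t ∈ Ici x,
      HasDerivAt (gHi a) (-(t ^ (a - 1) * exp (-t) * (1 + t / (t - a) ^ 2))) t :=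
    fun t ht => hasDerivAt_gHi (hx.trans_le ht) (hax.trans_le ht).ne'
  have hnonpos : ∀ t ∈ Ioi x, -(t ^ (a - 1) * exp (-t) * (1 + t / (t - a) ^ 2)) ≤ 0 := by
    intro t ht
    have : 0 < t := hx.trans ht
    exact neg_nonpos.2 (by positivity)
  refine ⟨?_, ?_⟩
  · simpa using (integrableOn_Ioi_deriv_of_nonpos' hderiv hnonpos (tendsto_gHi_atTop a)).neg
  · simpa [integral_neg] using
      integral_Ioi_of_hasDerivAt_of_nonpos' hderiv hnonpos (tendsto_gHi_atTop a)

lemma integrableOn_Ioi_gHi_remainder (hx : 0 < x) (hax : a < x) :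
    IntegrableOn (fun t => t ^ (a - 1) * exp (-t) * (t / (t - a) ^ 2)) (Ioi x) := by
  refine ((integrableOn_Ioi_and_integral_eq_gHi hx hax).1.sub
    (integrableOn_Ioi_rpow_mul_exp_neg (a - 1) hx)).congr (.of_forall fun t => ?_)
  simp only [Pi.sub_apply]
  ring

lemma gHi_eq_incGamma_add (hx : 0 < x) (hax : a < x) :
    gHi a x = incGamma a x + ∫ t in Ioi x, t ^ (a - 1) * exp (-t) * (t / (t - a) ^ 2) := by
  rw [← (integrableOn_Ioi_and_integral_eq_gHi hx hax).2, incGamma,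
    ← integral_add (integrableOn_Ioi_rpow_mul_exp_neg (a - 1) hx)
      (integrableOn_Ioi_gHi_remainder hx hax)]
  simp only [mul_add, mul_one]

lemma gHi_le_mul_incGamma (ha : a < 0) (hx : 0 < x) :
    gHi a x ≤ (1 + (-a)⁻¹) * incGamma a x := by
  have hax : a < x := ha.trans hx
  have hratio : ∀ t ∈ Ioi x, t / (t - a) ^ 2 ≤ (-a)⁻¹ := by
    intro t ht
    have ht0 : 0 < t := hx.trans ht
    rw [inv_eq_one_div, div_le_div_iff₀ (by nlinarith) (by linarith)]
    nlinarith
  have hrem : ∫ t in Ioi x, t ^ (a - 1) * exp (-t) * (t / (t - a) ^ 2) ≤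
      (-a)⁻¹ * incGamma a x := by
    rw [incGamma, mul_comm, ← integral_mul_const]
    exact setIntegral_mono_on (integrableOn_Ioi_gHi_remainder hx hax)
      ((integrableOn_Ioi_rpow_mul_exp_neg (a - 1) hx).mul_const _) measurableSet_Ioi fun t ht =>
        mul_le_mul_of_nonneg_left (hratio t ht) (rpow_mul_exp_neg_pos _ (hx.trans ht)).le
  rw [gHi_eq_incGamma_add hx hax]
  linarith

end Remainder

section Asymptotics

variable {a : ℝ}

lemma tendsto_gHi_nhdsGT_zero (ha : a < 0) : Tendsto (gHi a) (𝓝[>] 0) atTop := by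
  have hcont : Tendsto (fun x : ℝ => exp (-x) / (x - a)) (𝓝[>] 0) (𝓝 (exp (-0) / (0 - a))) :=
    ContinuousAt.continuousWithinAt (ContinuousAt.div (by fun_prop) (by fun_prop) (by linarith))
  refine ((tendsto_rpow_neg_nhdsGT_zero ha).atTop_mul_pos ?_ hcont).congr fun x => ?_
  · exact div_pos (exp_pos _) (by linarith)
  · rw [gHi, mul_div_assoc]

lemma tendsto_incGamma_nhdsGT_zero (ha : a < 0) : Tendsto (incGamma a) (𝓝[>] 0) atTop := by
  have hC : 0 < 1 + (-a)⁻¹ := add_pos one_pos (inv_pos.2 (neg_pos.2 ha))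
  refine tendsto_atTop_mono' _ ?_ ((tendsto_gHi_nhdsGT_zero ha).atTop_div_const hC)
  filter_upwards [self_mem_nhdsWithin] with x hx
  exact (div_le_iff₀' hC).2 (gHi_le_mul_incGamma ha hx)

lemma tendsto_div_sub_sq_add_atTop (a b : ℝ) :
    Tendsto (fun x : ℝ => x / ((x - a) ^ 2 + b)) atTop (𝓝 0) := by
  have hden : Tendsto (fun x : ℝ => x + (-(2 * a) + (a ^ 2 + b) / x)) atTop atTop :=
    tendsto_id.atTop_add (tendsto_const_nhds.add (tendsto_const_nhds.div_atTop tendsto_id))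
  refine hden.inv_tendsto_atTop.congr' ?_
  filter_upwards [eventually_ne_atTop 0] with x hx
  rw [Pi.inv_apply]
  field_simp
  ring

lemma tendsto_div_sub_sq_add_nhds_zero {b : ℝ} (hab : a ^ 2 + b ≠ 0) :
    Tendsto (fun x : ℝ => x / ((x - a) ^ 2 + b)) (𝓝 0) (𝓝 0) := by
  have hcont : ContinuousAt (fun x : ℝ => x / ((x - a) ^ 2 + b)) 0 :=
    ContinuousAt.div (by fun_prop) (by fun_prop) (by simpa using hab)
  simpa using hcont.tendsto

lemma isLittleO_gHi_remainder_integrand {l : Filter ℝ}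
    (hl : Tendsto (fun t : ℝ => t / (t - a) ^ 2) l (𝓝 0)) :
    (fun t : ℝ => t ^ (a - 1) * exp (-t) * (t / (t - a) ^ 2)) =o[l]
      fun t => t ^ (a - 1) * exp (-t) := by
  simpa using (isBigO_refl (fun t : ℝ => t ^ (a - 1) * exp (-t)) l).mul_isLittleO
    ((isLittleO_one_iff ℝ).2 hl)

lemma gHi_isEquivalent_incGamma_of_isLittleO {l : Filter ℝ} (hpos : ∀ᶠ x in l, 0 < x)
    (hgt : ∀ᶠ x in l, a < x)
    (hrem : (fun x => ∫ t in Ioi x, t ^ (a - 1) * exp (-t) * (t / (t - a) ^ 2)) =o[l]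
      incGamma a) :
    gHi a ~[l] incGamma a := by
  refine (IsEquivalent.refl.add_isLittleO hrem).congr_left ?_
  filter_upwards [hpos, hgt] with x hx hax using (gHi_eq_incGamma_add hx hax).symm

lemma gHi_isEquivalent_incGamma_atTop (a : ℝ) : gHi a ~[atTop] incGamma a := by
  refine gHi_isEquivalent_incGamma_of_isLittleO (eventually_gt_atTop 0) (eventually_gt_atTop a) ?_
  refine isLittleO_setIntegral_Ioi_atTop
    ⟨Ioi 1, Ioi_mem_atTop 1, integrableOn_Ioi_rpow_mul_exp_neg (a - 1) one_pos⟩ ?_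
    (isLittleO_gHi_remainder_integrand (by simpa using tendsto_div_sub_sq_add_atTop a 0))
  filter_upwards [eventually_gt_atTop 0] with t ht using (rpow_mul_exp_neg_pos _ ht).le

lemma gHi_isEquivalent_incGamma_nhdsGT_zero (ha : a < 0) : gHi a ~[𝓝[>] 0] incGamma a := by
  have hpos : ∀ᶠ x : ℝ in 𝓝[>] 0, 0 < x := self_mem_nhdsWithin
  have hratio : Tendsto (fun t : ℝ => t / (t - a) ^ 2) (𝓝 0) (𝓝 0) := by
    simpa using tendsto_div_sub_sq_add_nhds_zero (a := a) (b := 0) (by simpa using ha.ne)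
  refine gHi_isEquivalent_incGamma_of_isLittleO hpos (hpos.mono fun x hx => ha.trans hx) ?_
  exact isLittleO_setIntegral_Ioi_nhdsGT
    (fun x hx => integrableOn_Ioi_gHi_remainder hx (ha.trans hx))
    (fun x hx => integrableOn_Ioi_rpow_mul_exp_neg (a - 1) hx)
    (hpos.mono fun t ht => (rpow_mul_exp_neg_pos _ ht).le)
    (isLittleO_gHi_remainder_integrand (hratio.mono_left nhdsWithin_le_nhds))
    (tendsto_incGamma_nhdsGT_zero ha)

lemma gLo_eq_gHi_mul {x : ℝ} (hxa : x ≠ a) (hden : (x - a) ^ 2 + a ≠ 0) :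
    gLo a x = gHi a x * (1 - x / ((x - a) ^ 2 + a)) := by
  have hxa' : x - a ≠ 0 := sub_ne_zero.2 hxa
  rw [gLo, gHi]
  field_simp
  ring

lemma gLo_isEquivalent_gHi {l : Filter ℝ} (hne : ∀ᶠ x in l, x ≠ a)
    (hden : ∀ᶠ x in l, (x - a) ^ 2 + a ≠ 0)
    (hratio : Tendsto (fun x : ℝ => x / ((x - a) ^ 2 + a)) l (𝓝 0)) :
    gLo a ~[l] gHi a := by
  refine isEquivalent_iff_exists_eq_mul.2
    ⟨fun x => 1 - x / ((x - a) ^ 2 + a), by simpa using hratio.const_sub 1, ?_⟩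
  filter_upwards [hne, hden] with x hxa hx
  rw [gLo_eq_gHi_mul hxa hx, Pi.mul_apply, mul_comm]

lemma gLo_isEquivalent_gHi_atTop (a : ℝ) : gLo a ~[atTop] gHi a := by
  refine gLo_isEquivalent_gHi (eventually_ne_atTop a) ?_ (tendsto_div_sub_sq_add_atTop a a)
  filter_upwards [eventually_gt_atTop 0, eventually_gt_atTop (a + 1)] with x hx hxa
  have hsq : x - a ≤ (x - a) ^ 2 := le_self_pow₀ (by linarith) two_ne_zero
  linarith

lemma gLo_isEquivalent_gHi_nhds_zero (ha : a ≠ 0) (ha' : a ≠ -1) : gLo a ~[𝓝 0] gHi a := by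
  have hne : a ^ 2 + a ≠ 0 := by
    rw [sq, ← mul_add_one]
    exact mul_ne_zero ha fun h => ha' (eq_neg_of_add_eq_zero_left h)
  have hcont : ContinuousAt (fun x : ℝ => (x - a) ^ 2 + a) 0 := by fun_prop
  exact gLo_isEquivalent_gHi (eventually_ne_nhds ha.symm)
    (hcont.eventually_ne (by simpa using hne)) (tendsto_div_sub_sq_add_nhds_zero hne)

lemma tendsto_div_incGamma_of_isEquivalent {f : ℝ → ℝ} {l : Filter ℝ} (hpos : ∀ᶠ x in l, 0 < x)
    (hf : f ~[l] incGamma a) : Tendsto (fun x => f x / incGamma a x) l (𝓝 1) :=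
  (isEquivalent_iff_tendsto_one (hpos.mono fun _ hx => (incGamma_pos a hx).ne')).1 hf

end Asymptotics

theorem stmt7_general :
    (∀ a : ℝ, a < 0 → a ≠ -1 →
      Tendsto (fun x => gLo a x / incGamma a x) (𝓝[>] 0) (𝓝 1)) ∧
    (∀ a : ℝ, Tendsto (fun x => gLo a x / incGamma a x) atTop (𝓝 1)) ∧
    (∀ a : ℝ, a < 0 → Tendsto (fun x => gHi a x / incGamma a x) (𝓝[>] 0) (𝓝 1)) ∧
    (∀ a : ℝ, Tendsto (fun x => gHi a x / incGamma a x) atTop (𝓝 1)) := by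
  have hpos_zero : ∀ᶠ x : ℝ in 𝓝[>] 0, 0 < x := self_mem_nhdsWithin
  have hpos_atTop : ∀ᶠ x : ℝ in atTop, 0 < x := eventually_gt_atTop 0
  refine ⟨fun a ha ha' => ?_, fun a => ?_, fun a ha => ?_, fun a => ?_⟩
  · have hlo : gLo a ~[𝓝[>] 0] gHi a :=
      (gLo_isEquivalent_gHi_nhds_zero ha.ne ha').mono nhdsWithin_le_nhds
    exact tendsto_div_incGamma_of_isEquivalent hpos_zero
      (hlo.trans (gHi_isEquivalent_incGamma_nhdsGT_zero ha))
  · exact tendsto_div_incGamma_of_isEquivalent hpos_atTop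
      ((gLo_isEquivalent_gHi_atTop a).trans (gHi_isEquivalent_incGamma_atTop a))
  · exact tendsto_div_incGamma_of_isEquivalent hpos_zero
      (gHi_isEquivalent_incGamma_nhdsGT_zero ha)
  · exact tendsto_div_incGamma_of_isEquivalent hpos_atTop (gHi_isEquivalent_incGamma_atTop a)

theorem stmt7 :
    (∀ a : ℝ, a < -1 →
      Filter.Tendsto (fun x => gLo a x / incGamma a x) (nhdsWithin 0 (Set.Ioi 0)) (nhds 1) ∧
      Filter.Tendsto (fun x => gLo a x / incGamma a x) Filter.atTop (nhds 1)) ∧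
    (∀ a : ℝ, a < 0 →
      Filter.Tendsto (fun x => gHi a x / incGamma a x) (nhdsWithin 0 (Set.Ioi 0)) (nhds 1) ∧
      Filter.Tendsto (fun x => gHi a x / incGamma a x) Filter.atTop (nhds 1)) := by
  obtain ⟨lo_zero, lo_top, hi_zero, hi_top⟩ := stmt7_general
  exact ⟨fun a ha => ⟨lo_zero a (by linarith) ha.ne, lo_top a⟩,
    fun a ha => ⟨hi_zero a ha, hi_top a⟩⟩
end

section
/- Let a be a real number with a < 1. Then for every real x > 0, Γ(a,x) > e^(−x) x^a (x + 3 − a)/(x² + (4 − 2a)x + (a−1)(a−2)). Moreover, this lower bound is exact at infinity: the ratio of the bound to Γ(a,x) tends to 1 as x → ∞. -/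
/-!
Let `B(a, x)` be the bound, with denominator `D(a, x)`. A polynomial identity gives

  `∂ₓ B(a, x) = -x^(a-1) e^(-x) (1 - 2(a-1)(a-2) / D(a, x)²)`,

while `∂ₓ Γ(a, x) = -x^(a-1) e^(-x)`, and both functions vanish at infinity. If `(a-1)(a-2) > 0`,
then `D` has no positive zero and `B - Γ` is strictly increasing with limit `0`, hence negative.
For every `a` the quotient of the derivatives tends to `1`, and so does `B / Γ` by L'Hôpital's rule.
-/

open Real Filter Set

open scoped Topology

lemma lt_of_hasDerivAt_pos_of_tendsto_atTop {f f' : ℝ → ℝ} {b l x : ℝ}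
    (hf : ∀ y ∈ Ioi b, HasDerivAt f (f' y) y) (hf' : ∀ y ∈ Ioi b, 0 < f' y)
    (hl : Tendsto f atTop (𝓝 l)) (hx : x ∈ Ioi b) : f x < l := by
  have hmono : StrictMonoOn f (Ioi b) := by
    refine strictMonoOn_of_hasDerivWithinAt_pos (f' := f') (convex_Ioi b)
      (fun y hy => (hf y hy).continuousAt.continuousWithinAt) ?_ ?_ <;> rw [interior_Ioi]
    · exact fun y hy => (hf y hy).hasDerivWithinAt
    · exact hf'
  have hx₁ : x + 1 ∈ Ioi b := hx.trans (lt_add_one x)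
  calc f x < f (x + 1) := hmono hx hx₁ (lt_add_one x)
    _ ≤ l := ge_of_tendsto hl <| (eventually_ge_atTop (x + 1)).mono fun y hy =>
      hmono.monotoneOn hx₁ (lt_of_lt_of_le hx₁ hy) hy

lemma hasDerivAt_integral_Ioi {E : Type*} [NormedAddCommGroup E] [NormedSpace ℝ E]
    [CompleteSpace E] {f : ℝ → E} {b x : ℝ} (hf : MeasureTheory.IntegrableOn f (Ioi b))
    (hx : x ∈ Ioi b) (hfx : ContinuousAt f x) :
    HasDerivAt (fun y => ∫ t in Ioi y, f t) (-f x) x := by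
  have hbx : IntervalIntegrable f MeasureTheory.volume b x :=
    (intervalIntegrable_iff_integrableOn_Ioc_of_le hx.le).2 (hf.mono_set Ioc_subset_Ioi_self)
  have hprimitive : HasDerivAt (fun y => ∫ t in b..y, f t) (f x) x :=
    intervalIntegral.integral_hasDerivAt_right hbx
      ⟨Ioi b, Ioi_mem_nhds hx, hf.aestronglyMeasurable⟩ hfx
  refine (hprimitive.const_sub (∫ t in Ioi b, f t)).congr_of_eventuallyEq ?_
  filter_upwards [Ioi_mem_nhds hx] with y hy
  rw [← intervalIntegral.integral_Ioi_sub_Ioi hf hy.le, sub_sub_cancel]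

section IncGamma

variable {x : ℝ}

lemma integrableOn_rpow_mul_exp_neg_Ioi (s : ℝ) (hx : 0 < x) :
    MeasureTheory.IntegrableOn (fun t : ℝ => t ^ s * exp (-t)) (Ioi x) := by
  refine integrable_of_isBigO_exp_neg one_half_pos ?_ ?_
  · exact (continuousOn_id.rpow_const fun t ht => .inl (hx.trans_le ht).ne').mul (by fun_prop)
  · simpa only [mul_comm] using (Gamma_integrand_isLittleO s).isBigO

lemma hasDerivAt_incGamma (a : ℝ) (hx : 0 < x) :
    HasDerivAt (incGamma a) (-(x ^ (a - 1) * exp (-x))) x :=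
  hasDerivAt_integral_Ioi (integrableOn_rpow_mul_exp_neg_Ioi (a - 1) (half_pos hx))
    (half_lt_self hx)
    ((continuousAt_rpow_const x (a - 1) (.inl hx.ne')).mul (by fun_prop))

lemma tendsto_incGamma_atTop (a : ℝ) : Tendsto (incGamma a) atTop (𝓝 0) :=
  MeasureTheory.tendsto_integral_Ioi_zero tendsto_id

end IncGamma

section Legendre

variable {a x : ℝ}

/-- The denominator of the second convergent of Legendre's continued fraction
`Γ(a,x) = e^(-x) x^a / (x + 1 - a - 1(1 - a) / (x + 3 - a - 2(2 - a) / (x + 5 - a - ⋯)))`,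
that is `(x + 1 - a)(x + 3 - a) - (1 - a)` in expanded form. -/
noncomputable def legendreDenom (a x : ℝ) : ℝ := x ^ 2 + (4 - 2 * a) * x + (a - 1) * (a - 2)

/-- The second convergent of Legendre's continued fraction for `Γ(a,x)`, which is the lower
bound of `stmt13`; it takes the junk value `0` where `legendreDenom a x = 0`. -/
noncomputable def legendreBound (a x : ℝ) : ℝ :=
  exp (-x) * x ^ a * (x + 3 - a) / legendreDenom a x

lemma legendreDenom_pos (ha : 0 < (a - 1) * (a - 2)) (hx : 0 < x) : 0 < legendreDenom a x := by
  unfold legendreDenom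
  rcases le_or_gt a 2 with ha₂ | ha₂
  · have : 0 ≤ (4 - 2 * a) * x := mul_nonneg (by linarith) hx.le
    positivity
  · calc 0 < (x + 2 - a) ^ 2 + (a - 2) := add_pos_of_nonneg_of_pos (sq_nonneg _) (sub_pos.2 ha₂)
      _ = x ^ 2 + (4 - 2 * a) * x + (a - 1) * (a - 2) := by ring

lemma tendsto_legendreDenom_atTop (a : ℝ) : Tendsto (legendreDenom a) atTop atTop := by
  have hsq : Tendsto (fun x : ℝ => (x + (2 - a)) ^ 2 + (a - 2)) atTop atTop :=
    tendsto_atTop_add_const_right _ _ <| (tendsto_pow_atTop two_ne_zero).comp <|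
      tendsto_atTop_add_const_right _ _ tendsto_id
  refine hsq.congr fun x => ?_
  unfold legendreDenom
  ring

lemma hasDerivAt_legendreDenom (a x : ℝ) :
    HasDerivAt (legendreDenom a) (2 * x + (4 - 2 * a)) x :=
  (((hasDerivAt_pow 2 x).add ((hasDerivAt_id x).const_mul (4 - 2 * a))).add_const
    ((a - 1) * (a - 2))).congr_deriv (by simp)

lemma hasDerivAt_legendreBound (hx : x ≠ 0) (hD : legendreDenom a x ≠ 0) :
    HasDerivAt (legendreBound a)
      (-(x ^ (a - 1) * exp (-x)) * (1 - 2 * ((a - 1) * (a - 2)) / legendreDenom a x ^ 2)) x := by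
  have hnum : HasDerivAt (fun y : ℝ => exp (-y) * y ^ a * (y + 3 - a))
      ((exp (-x) * (-1) * x ^ a + exp (-x) * (a * x ^ (a - 1))) * (x + 3 - a) +
        exp (-x) * x ^ a * 1) x :=
    ((hasDerivAt_neg x).exp.mul (hasDerivAt_rpow_const (.inl hx))).mul
      (((hasDerivAt_id x).add_const 3).sub_const a)
  refine (hnum.div (hasDerivAt_legendreDenom a x) hD).congr_deriv ?_
  have hxa : x ^ a = x ^ (a - 1) * x := by rw [← rpow_add_one hx, sub_add_cancel]
  rw [hxa, one_sub_div (pow_ne_zero 2 hD), ← mul_div_assoc]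
  congr 1
  unfold legendreDenom
  ring

lemma tendsto_legendreBound_atTop (a : ℝ) : Tendsto (legendreBound a) atTop (𝓝 0) := by
  have hexp : Tendsto (fun x : ℝ => x ^ a * exp (-x)) atTop (𝓝 0) := by
    simpa using tendsto_rpow_mul_exp_neg_mul_atTop_nhds_zero a 1 one_pos
  have hrat : Tendsto (fun x : ℝ => (x + 3 - a) / legendreDenom a x) atTop (𝓝 0) := by
    let P : Polynomial ℝ := .X + .C (3 - a)
    let Q : Polynomial ℝ := .X ^ 2 + .C (4 - 2 * a) * .X + .C ((a - 1) * (a - 2))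
    have hdeg : P.degree < Q.degree := by
      have hP : P.degree = 1 := by unfold P; compute_degree!
      have hQ : Q.degree = 2 := by unfold Q; compute_degree!
      rw [hP, hQ]; norm_num
    simpa [P, Q, legendreDenom, add_sub_assoc] using
      Polynomial.div_tendsto_atTop_zero_of_degree_lt P Q hdeg
  refine (mul_zero (0 : ℝ) ▸ hexp.mul hrat).congr fun x => ?_
  unfold legendreBound
  ring

lemma legendreBound_lt_incGamma (ha : 0 < (a - 1) * (a - 2)) (hx : 0 < x) :
    legendreBound a x < incGamma a x := by
  have hderiv (y : ℝ) (hy : y ∈ Ioi 0) : HasDerivAt (legendreBound a - incGamma a)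
      (y ^ (a - 1) * exp (-y) * (2 * ((a - 1) * (a - 2)) / legendreDenom a y ^ 2)) y :=
    ((hasDerivAt_legendreBound hy.ne' (legendreDenom_pos ha hy).ne').sub
      (hasDerivAt_incGamma a hy)).congr_deriv (by ring)
  have hderiv_pos (y : ℝ) (hy : y ∈ Ioi 0) :
      0 < y ^ (a - 1) * exp (-y) * (2 * ((a - 1) * (a - 2)) / legendreDenom a y ^ 2) := by
    have hy₀ : 0 < y := hy
    have hD := legendreDenom_pos ha hy
    positivity
  have hlim : Tendsto (legendreBound a - incGamma a) atTop (𝓝 0) :=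
    sub_zero (0 : ℝ) ▸ (tendsto_legendreBound_atTop a).sub (tendsto_incGamma_atTop a)
  have hneg := lt_of_hasDerivAt_pos_of_tendsto_atTop hderiv hderiv_pos hlim hx
  exact sub_neg.1 hneg

lemma tendsto_legendreBound_div_incGamma_atTop (a : ℝ) :
    Tendsto (fun x => legendreBound a x / incGamma a x) atTop (𝓝 1) := by
  have hbound : ∀ᶠ x in atTop, HasDerivAt (legendreBound a)
      (-(x ^ (a - 1) * exp (-x)) * (1 - 2 * ((a - 1) * (a - 2)) / legendreDenom a x ^ 2)) x := by
    filter_upwards [eventually_ne_atTop 0, (tendsto_legendreDenom_atTop a).eventually_ne_atTop 0]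
      with x hx hD using hasDerivAt_legendreBound hx hD
  have hgamma : ∀ᶠ x in atTop, HasDerivAt (incGamma a) (-(x ^ (a - 1) * exp (-x))) x :=
    (eventually_gt_atTop 0).mono fun x hx => hasDerivAt_incGamma a hx
  have hgamma_ne : ∀ᶠ x : ℝ in atTop, -(x ^ (a - 1) * exp (-x)) ≠ 0 :=
    (eventually_gt_atTop 0).mono fun x hx => neg_ne_zero.2 (by positivity)
  have hdefect : Tendsto (fun x => 2 * ((a - 1) * (a - 2)) / legendreDenom a x ^ 2)
      atTop (𝓝 0) :=
    ((tendsto_pow_atTop two_ne_zero).comp (tendsto_legendreDenom_atTop a)).const_div_atTop _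
  refine HasDerivAt.lhopital_zero_atTop hbound hgamma hgamma_ne (tendsto_legendreBound_atTop a)
    (tendsto_incGamma_atTop a) ?_
  refine (sub_zero (1 : ℝ) ▸ hdefect.const_sub 1).congr' ?_
  filter_upwards [hgamma_ne] with x hx using (mul_div_cancel_left₀ _ hx).symm

end Legendre

theorem stmt13_general (a : ℝ) :
    (a < 1 ∨ 2 < a → ∀ x : ℝ, 0 < x → legendreBound a x < incGamma a x) ∧
      Tendsto (fun x => legendreBound a x / incGamma a x) atTop (𝓝 1) := by
  refine ⟨fun ha x hx => legendreBound_lt_incGamma ?_ hx,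
    tendsto_legendreBound_div_incGamma_atTop a⟩
  rcases ha with ha | ha
  · exact mul_pos_of_neg_of_neg (by linarith) (by linarith)
  · exact mul_pos (by linarith) (by linarith)

theorem stmt13 (a : ℝ) (ha : a < 1) :
    (∀ x : ℝ, 0 < x →
      Real.exp (-x) * x ^ a * (x + 3 - a) / (x ^ 2 + (4 - 2 * a) * x + (a - 1) * (a - 2))
        < incGamma a x) ∧
    Filter.Tendsto
      (fun x : ℝ =>
        Real.exp (-x) * x ^ a * (x + 3 - a) / (x ^ 2 + (4 - 2 * a) * x + (a - 1) * (a - 2)) /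
          incGamma a x)
      Filter.atTop (nhds 1) :=
  ⟨(stmt13_general a).1 (.inl ha), (stmt13_general a).2⟩
end
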